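/- arXiv:2409.05854 — 6 statements merged into one kernel-verified Lean document; each statement's English description precedes it below -/
import Mathlib

section
/- Then the leading-order density at the new time level has vanishing spatial gradient: ∇ρ₀ⁿ⁺¹(x) = 0 for all x ∈ ℝ^d. (Multiply the momentum update by ε² and let ε → 0; well-preparedness at time tⁿ eliminates the remaining gradient terms.) -/
/-!
Multiplying the momentum update by `ε²` gives an identity `G ε = 0` on `(0, 1]`, where
`G ε = ε² (time difference + convection) + ∂ⱼ(ρ_ε ^ γ - ρ_ε) + ∂ⱼ(ρ⁺_ε)` at a fixed point `x`.
Each spatial derivative here is taken of a function that is jointly smooth in `(ε, y)` near `(0, x)`,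
so it depends continuously on `ε` at `0` (`continuousAt_pder_param`), and hence `G 0 = 0`.
At `ε = 0` the first term disappears, the pressure term vanishes because `ρ₀ⁿ` is constant, and
what remains is `∂ⱼ ρ₀ⁿ⁺¹(x) = 0`.

The densities `ρ_ε` need not be positive for `ε` of order one, but joint smoothness is needed only
near `(0, x)`, where `ρ_ε` is close to `ρ₀ⁿ(x) > 0`.
-/

open Real

/-- Spatial partial derivative in direction `i`. -/
noncomputable def pder {d : ℕ} (f : (Fin d → ℝ) → ℝ) (i : Fin d) (x : Fin d → ℝ) : ℝ :=
  fderiv ℝ f x (Pi.single i 1)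

/-- Spatial divergence of a vector field on `ℝ^d`. -/
noncomputable def divg {d : ℕ} (w : (Fin d → ℝ) → (Fin d → ℝ)) (x : Fin d → ℝ) : ℝ :=
  ∑ i, pder (fun y => w y i) i x

/-- If `F` is jointly smooth in `(ε, y)` near `(0, x)`, its spatial derivatives at `x` depend
continuously on the parameter `ε` at `0`. -/
lemma continuousAt_pder_param {d : ℕ} (F : ℝ → (Fin d → ℝ) → ℝ) (x : Fin d → ℝ) (i : Fin d)
    (hF : ContDiffAt ℝ (⊤ : ℕ∞) (Function.uncurry F) ((0 : ℝ), x)) :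
    ContinuousAt (fun ε => pder (F ε) i x) 0 := by
  have h := ContDiffAt.fderiv (m := 0) (n := ((⊤ : ℕ∞) : WithTop ℕ∞)) (f := F)
    (g := fun _ : ℝ => x) (x₀ := (0 : ℝ)) hF contDiffAt_const (by simp)
  exact h.continuousAt.clm_apply continuousAt_const

/-- if well-prepared data `ρⁿ_ε = ρ₀ⁿ + ε²ρ₂ⁿ`, `qⁿ_ε = ρⁿ_ε(u₀ⁿ + ε u₁ⁿ)`
(with `∇ρ₀ⁿ = 0`, `∇·u₀ⁿ = 0`) are updated by the first-order time semi-discrete scheme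
to `ρⁿ⁺¹_ε = ρ₀ⁿ⁺¹ + ε²ρ₂ⁿ⁺¹`, `qⁿ⁺¹_ε = ρⁿ⁺¹_ε(u₀ⁿ⁺¹ + ε u₁ⁿ⁺¹)` for every
`ε ∈ (0,1]`, then the leading-order density at the new time level has vanishing
spatial gradient: `∇ρ₀ⁿ⁺¹ = 0` on `ℝ^d`. -/
theorem scheme_new_leading_density_gradient_vanishes
    {d : ℕ} (Δt γ : ℝ) (hΔt : 0 < Δt) (hγ : 1 ≤ γ)
    (r0n r2n : (Fin d → ℝ) → ℝ) (u0n u1n : (Fin d → ℝ) → (Fin d → ℝ))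
    (r0p r2p : (Fin d → ℝ) → ℝ) (u0p u1p : (Fin d → ℝ) → (Fin d → ℝ))
    (hr0n : ContDiff ℝ (⊤ : ℕ∞) r0n) (hr2n : ContDiff ℝ (⊤ : ℕ∞) r2n)
    (hu0n : ContDiff ℝ (⊤ : ℕ∞) u0n) (hu1n : ContDiff ℝ (⊤ : ℕ∞) u1n)
    (hr0p : ContDiff ℝ (⊤ : ℕ∞) r0p) (hr2p : ContDiff ℝ (⊤ : ℕ∞) r2p)
    (hu0p : ContDiff ℝ (⊤ : ℕ∞) u0p) (hu1p : ContDiff ℝ (⊤ : ℕ∞) u1p)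
    (hr0npos : ∀ x, 0 < r0n x) (hr0ppos : ∀ x, 0 < r0p x)
    -- well-preparedness of the data at time tⁿ: ∇ρ₀ⁿ = 0 and ∇·u₀ⁿ = 0
    (hwp1 : ∀ (x : Fin d → ℝ) (i : Fin d), pder r0n i x = 0)
    (hwp2 : ∀ x : Fin d → ℝ, divg u0n x = 0)
    -- mass update of the first-order time semi-discrete scheme, for every ε ∈ (0,1]
    (mass : ∀ ε ∈ Set.Ioc (0 : ℝ) 1, ∀ x : Fin d → ℝ,
      ((r0p x + ε ^ 2 * r2p x) - (r0n x + ε ^ 2 * r2n x)) / Δt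
        + divg (fun y i => (r0p y + ε ^ 2 * r2p y) * (u0p y i + ε * u1p y i)) x = 0)
    -- momentum update of the first-order time semi-discrete scheme, for every ε ∈ (0,1]
    (mom : ∀ ε ∈ Set.Ioc (0 : ℝ) 1, ∀ (x : Fin d → ℝ) (j : Fin d),
      ((r0p x + ε ^ 2 * r2p x) * (u0p x j + ε * u1p x j)
          - (r0n x + ε ^ 2 * r2n x) * (u0n x j + ε * u1n x j)) / Δt
        + (∑ i, pder (fun y =>
            ((r0n y + ε ^ 2 * r2n y) * (u0n y j + ε * u1n y j))
              * ((r0n y + ε ^ 2 * r2n y) * (u0n y i + ε * u1n y i))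
              / (r0n y + ε ^ 2 * r2n y)) i x)
        + (1 / ε ^ 2) * pder (fun y =>
            (r0n y + ε ^ 2 * r2n y) ^ γ - (r0n y + ε ^ 2 * r2n y)) j x
        + (1 / ε ^ 2) * pder (fun y => r0p y + ε ^ 2 * r2p y) j x = 0) :
    ∀ (x : Fin d → ℝ) (i : Fin d), pder r0p i x = 0 := by
  intro x j
  have lift : ∀ f : (Fin d → ℝ) → ℝ, ContDiff ℝ (⊤ : ℕ∞) f →
      ContDiffAt ℝ (⊤ : ℕ∞) (fun p : ℝ × (Fin d → ℝ) => f p.2) ((0 : ℝ), x) :=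
    fun f hf => (hf.comp contDiff_snd).contDiffAt
  have hε : ContDiffAt ℝ (⊤ : ℕ∞) (fun p : ℝ × (Fin d → ℝ) => p.1) ((0 : ℝ), x) :=
    contDiff_fst.contDiffAt
  have hρn : ContDiffAt ℝ (⊤ : ℕ∞)
      (fun p : ℝ × (Fin d → ℝ) => r0n p.2 + p.1 ^ 2 * r2n p.2) ((0 : ℝ), x) :=
    (lift _ hr0n).add ((hε.pow 2).mul (lift _ hr2n))
  have hρp : ContDiffAt ℝ (⊤ : ℕ∞)
      (fun p : ℝ × (Fin d → ℝ) => r0p p.2 + p.1 ^ 2 * r2p p.2) ((0 : ℝ), x) :=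
    (lift _ hr0p).add ((hε.pow 2).mul (lift _ hr2p))
  have hun : ∀ k, ContDiffAt ℝ (⊤ : ℕ∞)
      (fun p : ℝ × (Fin d → ℝ) => u0n p.2 k + p.1 * u1n p.2 k) ((0 : ℝ), x) := fun k =>
    (lift (fun y => u0n y k) (contDiff_pi.1 hu0n k)).add
      (hε.mul (lift (fun y => u1n y k) (contDiff_pi.1 hu1n k)))
  have hne : r0n x + (0 : ℝ) ^ 2 * r2n x ≠ 0 := by simpa using (hr0npos x).ne'
  have hconv := fun i => continuousAt_pder_param (fun ε y =>
      ((r0n y + ε ^ 2 * r2n y) * (u0n y j + ε * u1n y j))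
        * ((r0n y + ε ^ 2 * r2n y) * (u0n y i + ε * u1n y i))
        / (r0n y + ε ^ 2 * r2n y)) x i
    (((hρn.mul (hun j)).mul (hρn.mul (hun i))).fun_div hρn hne)
  have hpres := continuousAt_pder_param (fun ε y =>
      (r0n y + ε ^ 2 * r2n y) ^ γ - (r0n y + ε ^ 2 * r2n y)) x j
    ((hρn.rpow_const_of_ne hne).sub hρn)
  have hdens := continuousAt_pder_param (fun ε y => r0p y + ε ^ 2 * r2p y) x j hρp
  have htime : ContinuousAt (fun ε : ℝ =>
      ((r0p x + ε ^ 2 * r2p x) * (u0p x j + ε * u1p x j)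
        - (r0n x + ε ^ 2 * r2n x) * (u0n x j + ε * u1n x j)) / Δt) 0 := by
    fun_prop
  have hsq : ContinuousAt (fun ε : ℝ => ε ^ 2) 0 := by fun_prop
  have hG := ((hsq.mul (htime.add (tendsto_finsetSum Finset.univ fun i _ => hconv i))).add
    hpres).add hdens
  have hlim := hG.tendsto.mono_left (nhdsWithin_le_nhds (s := Set.Ioi (0 : ℝ)))
  have hzero := tendsto_nhds_unique (hlim.congr' (f₂ := fun _ => (0 : ℝ)) (by
    filter_upwards [Ioc_mem_nhdsGT (zero_lt_one' ℝ)] with ε hε1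
    have hpos : ε ^ 2 ≠ 0 := (pow_pos hε1.1 2).ne'
    have hm := congrArg (fun t => ε ^ 2 * t) (mom ε hε1 x j)
    simp only [mul_add, mul_zero, ← mul_assoc, mul_one_div_cancel hpos, one_mul] at hm
    simp only [mul_add, ← mul_assoc]
    exact hm)) tendsto_const_nhds
  have hfd : ∀ y, fderiv ℝ r0n y = 0 := fun y =>
    ContinuousLinearMap.coe_injective (LinearMap.pi_ext' fun i => LinearMap.ext_ring (hwp1 y i))
  have hconst : ∀ y, r0n y = r0n x := fun y =>
    is_const_of_fderiv_eq_zero (𝕜 := ℝ) (hr0n.differentiable (by simp)) hfd y x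
  have hpres0 : pder (fun y => r0n y ^ γ - r0n y) j x = 0 := by
    simp [pder, hconst]
  simpa [hpres0] using hzero
end

section
/- Then the leading-order updated velocity is divergence-free: ∇·u₀ⁿ⁺¹(x) = 0 for all x ∈ ℝ^d; i.e. the updated solution is again well-prepared. -/
/-!
Since `ρ₀ⁿ = ρ₀ⁿ⁺¹ = c`, the mass update at a fixed point `x` reads
`a₀ + a₁ ε + a₂ ε² + a₃ ε³ = 0` for all `ε ∈ (0,1]`, where `a₀ = c ∇·u₀ⁿ⁺¹(x)`: the time
difference of the densities is of order `ε²`. A cubic polynomial vanishing on `(0,1]` is zero,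
so `a₀ = 0`, and `c > 0` gives the claim. The expansion of the flux is `divg_flux_expansion`.
-/

open Real

/-- The divergence of the momentum `(c + ε²ρ₂)(u₀ + ε u₁)`, sorted by powers of `ε`. -/
lemma divg_flux_expansion {d : ℕ} {r : (Fin d → ℝ) → ℝ} {u v : (Fin d → ℝ) → (Fin d → ℝ)}
    (hr : Differentiable ℝ r) (hu : Differentiable ℝ u) (hv : Differentiable ℝ v)
    (c ε : ℝ) (x : Fin d → ℝ) :
    divg (fun y i => (c + ε ^ 2 * r y) * (u y i + ε * v y i)) x
      = c * divg u x + ε * (c * divg v x) + ε ^ 2 * divg (fun y i => r y * u y i) x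
        + ε ^ 3 * divg (fun y i => r y * v y i) x := by
  simp only [divg, Finset.mul_sum, ← Finset.sum_add_distrib]
  refine Finset.sum_congr rfl fun i _ => ?_
  have hr' := (hr x).hasFDerivAt
  have hu' : HasFDerivAt (fun y => u y i) _ x := (differentiableAt_pi.1 (hu x) i).hasFDerivAt
  have hv' : HasFDerivAt (fun y => v y i) _ x := (differentiableAt_pi.1 (hv x) i).hasFDerivAt
  have h := ((hr'.const_mul (ε ^ 2)).const_add c).fun_mul (hu'.fun_add (hv'.const_mul ε))
  simp only [pder, h.fderiv, (hr'.fun_mul hu').fderiv, (hr'.fun_mul hv').fderiv,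
    add_apply, smul_apply, smul_eq_mul]
  ring

/-- if well-prepared, ℤ^d-periodic data `ρⁿ_ε = ρ₀ⁿ + ε²ρ₂ⁿ`,
`qⁿ_ε = ρⁿ_ε(u₀ⁿ + ε u₁ⁿ)` (with `∇ρ₀ⁿ = 0`, `∇·u₀ⁿ = 0`) are updated by the
first-order time semi-discrete scheme for every `ε ∈ (0,1]`, and
`ρ₀ⁿ⁺¹ = ρ₀ⁿ = c` is a positive constant, then the leading-order updated velocity is
divergence-free: `∇·u₀ⁿ⁺¹ = 0` on `ℝ^d`; i.e. the update is again well-prepared. -/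
theorem scheme_new_leading_velocity_divergence_free
    {d : ℕ} (Δt γ : ℝ) (hΔt : 0 < Δt) (hγ : 1 ≤ γ)
    (r0n r2n : (Fin d → ℝ) → ℝ) (u0n u1n : (Fin d → ℝ) → (Fin d → ℝ))
    (r0p r2p : (Fin d → ℝ) → ℝ) (u0p u1p : (Fin d → ℝ) → (Fin d → ℝ))
    (hr0n : ContDiff ℝ (⊤ : ℕ∞) r0n) (hr2n : ContDiff ℝ (⊤ : ℕ∞) r2n)
    (hu0n : ContDiff ℝ (⊤ : ℕ∞) u0n) (hu1n : ContDiff ℝ (⊤ : ℕ∞) u1n)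
    (hr0p : ContDiff ℝ (⊤ : ℕ∞) r0p) (hr2p : ContDiff ℝ (⊤ : ℕ∞) r2p)
    (hu0p : ContDiff ℝ (⊤ : ℕ∞) u0p) (hu1p : ContDiff ℝ (⊤ : ℕ∞) u1p)
    (hr0npos : ∀ x, 0 < r0n x) (hr0ppos : ∀ x, 0 < r0p x)
    -- ℤ^d-periodicity of all coefficient functions
    (hperR : ∀ f ∈ [r0n, r2n, r0p, r2p], ∀ (x : Fin d → ℝ) (z : Fin d → ℤ),
      f (x + fun i => (z i : ℝ)) = f x)
    (hperU : ∀ g ∈ [u0n, u1n, u0p, u1p], ∀ (x : Fin d → ℝ) (z : Fin d → ℤ),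
      g (x + fun i => (z i : ℝ)) = g x)
    -- ρ₀ⁿ⁺¹ = ρ₀ⁿ is a positive constant c (as follows from the scheme)
    (c : ℝ) (hc : 0 < c) (hr0nc : ∀ x : Fin d → ℝ, r0n x = c)
    (hr0pc : ∀ x : Fin d → ℝ, r0p x = c)
    -- well-preparedness of the data at time tⁿ: ∇ρ₀ⁿ = 0 and ∇·u₀ⁿ = 0
    (hwp1 : ∀ (x : Fin d → ℝ) (i : Fin d), pder r0n i x = 0)
    (hwp2 : ∀ x : Fin d → ℝ, divg u0n x = 0)
    -- mass update of the first-order time semi-discrete scheme, for every ε ∈ (0,1]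
    (mass : ∀ ε ∈ Set.Ioc (0 : ℝ) 1, ∀ x : Fin d → ℝ,
      ((r0p x + ε ^ 2 * r2p x) - (r0n x + ε ^ 2 * r2n x)) / Δt
        + divg (fun y i => (r0p y + ε ^ 2 * r2p y) * (u0p y i + ε * u1p y i)) x = 0)
    -- momentum update of the first-order time semi-discrete scheme, for every ε ∈ (0,1]
    (mom : ∀ ε ∈ Set.Ioc (0 : ℝ) 1, ∀ (x : Fin d → ℝ) (j : Fin d),
      ((r0p x + ε ^ 2 * r2p x) * (u0p x j + ε * u1p x j)
          - (r0n x + ε ^ 2 * r2n x) * (u0n x j + ε * u1n x j)) / Δt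
        + (∑ i, pder (fun y =>
            ((r0n y + ε ^ 2 * r2n y) * (u0n y j + ε * u1n y j))
              * ((r0n y + ε ^ 2 * r2n y) * (u0n y i + ε * u1n y i))
              / (r0n y + ε ^ 2 * r2n y)) i x)
        + (1 / ε ^ 2) * pder (fun y =>
            (r0n y + ε ^ 2 * r2n y) ^ γ - (r0n y + ε ^ 2 * r2n y)) j x
        + (1 / ε ^ 2) * pder (fun y => r0p y + ε ^ 2 * r2p y) j x = 0) :
    ∀ x : Fin d → ℝ, divg u0p x = 0 := by
  intro x
  have top_ne : ((⊤ : ℕ∞) : WithTop ℕ∞) ≠ 0 := by simp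
  -- The mass update at `x` as a cubic polynomial in `ε`.
  have key : ∀ ε ∈ Set.Ioc (0 : ℝ) 1,
      c * divg u0p x + ε * (c * divg u1p x)
        + ε ^ 2 * ((r2p x - r2n x) / Δt + divg (fun y i => r2p y * u0p y i) x)
        + ε ^ 3 * divg (fun y i => r2p y * u1p y i) x = 0 := by
    intro ε hε
    have h := mass ε hε x
    simp only [hr0nc, hr0pc] at h
    rw [divg_flux_expansion (hr2p.differentiable top_ne) (hu0p.differentiable top_ne)
      (hu1p.differentiable top_ne)] at h
    rw [← h]
    ring
  -- Four distinct zeros determine a cubic, so its constant coefficient vanishes.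
  have h1 := key 1 (by norm_num)
  have h2 := key (1 / 2) (by norm_num)
  have h3 := key (1 / 3) (by norm_num)
  have h4 := key (1 / 4) (by norm_num)
  have h0 : c * divg u0p x = 0 := by linarith
  exact (mul_eq_zero.1 h0).resolve_left hc.ne'
end

section
/- Then the leading-order coefficients satisfy a consistent one-step discretisation of the incompressible limit momentum equation: (u₀ⁿ⁺¹ − u₀ⁿ)/Δt + ∇·(u₀ⁿ⊗u₀ⁿ) + (1/ρ₀ⁿ)·∇( γ(ρ₀ⁿ)^{γ−1}ρ₂ⁿ − ρ₂ⁿ + ρ₂ⁿ⁺¹ ) = 0 on ℝ^d, which is the limit momentum update with second-order pressure p₍₂₎ⁿ = γ(ρ₀ⁿ)^{γ−1}ρ₂ⁿ and with p₍₂₎ⁿ⁺¹ identified as p₍₂₎ⁿ − ρ₂ⁿ + ρ₂ⁿ⁺¹. Hence the scheme is asymptotically consistent with the zero Mach number limit system. -/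
/-!
Fix a point `x` and a component `j`. Where the density `c + ε² ρ₂ⁿ` is positive, which at `x` holds
for all small `ε`, the product and chain rules turn the momentum update into `F ε = 0`. Since
`∇ρ₀ = 0`, both pressure gradients are exactly of size `ε²` and cancel the stiff factor `1 / ε²`, so
`F` is continuous at `ε = 0`. Letting `ε → 0⁺` gives `F 0 = 0`, which is `c` times the claimed
limit equation.
-/

open Topology

open Real

/-- if well-prepared data `ρⁿ_ε = ρ₀ⁿ + ε²ρ₂ⁿ`,
`qⁿ_ε = ρⁿ_ε(u₀ⁿ + ε u₁ⁿ)` (with `∇ρ₀ⁿ = 0`, `∇·u₀ⁿ = 0`) are updated by the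
first-order time semi-discrete scheme for every `ε ∈ (0,1]`, and `ρ₀ⁿ⁺¹ = ρ₀ⁿ = c`
is a positive constant, then the leading-order coefficients satisfy
`(u₀ⁿ⁺¹ - u₀ⁿ)/Δt + ∇·(u₀ⁿ ⊗ u₀ⁿ) + (1/ρ₀ⁿ)∇(γ(ρ₀ⁿ)^{γ-1}ρ₂ⁿ - ρ₂ⁿ + ρ₂ⁿ⁺¹) = 0`,
a consistent one-step discretisation of the incompressible limit momentum equation
with `p₍₂₎ⁿ = γ(ρ₀ⁿ)^{γ-1}ρ₂ⁿ` and `p₍₂₎ⁿ⁺¹` identified as `p₍₂₎ⁿ - ρ₂ⁿ + ρ₂ⁿ⁺¹`;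
hence the scheme is asymptotically consistent with the zero Mach number limit. -/
theorem scheme_asymptotically_consistent_momentum
    {d : ℕ} (Δt γ : ℝ) (hΔt : 0 < Δt) (hγ : 1 ≤ γ)
    (r0n r2n : (Fin d → ℝ) → ℝ) (u0n u1n : (Fin d → ℝ) → (Fin d → ℝ))
    (r0p r2p : (Fin d → ℝ) → ℝ) (u0p u1p : (Fin d → ℝ) → (Fin d → ℝ))
    (hr0n : ContDiff ℝ (⊤ : ℕ∞) r0n) (hr2n : ContDiff ℝ (⊤ : ℕ∞) r2n)
    (hu0n : ContDiff ℝ (⊤ : ℕ∞) u0n) (hu1n : ContDiff ℝ (⊤ : ℕ∞) u1n)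
    (hr0p : ContDiff ℝ (⊤ : ℕ∞) r0p) (hr2p : ContDiff ℝ (⊤ : ℕ∞) r2p)
    (hu0p : ContDiff ℝ (⊤ : ℕ∞) u0p) (hu1p : ContDiff ℝ (⊤ : ℕ∞) u1p)
    (hr0npos : ∀ x, 0 < r0n x) (hr0ppos : ∀ x, 0 < r0p x)
    -- ρ₀ⁿ⁺¹ = ρ₀ⁿ is a positive constant c (as follows from the scheme)
    (c : ℝ) (hc : 0 < c) (hr0nc : ∀ x : Fin d → ℝ, r0n x = c)
    (hr0pc : ∀ x : Fin d → ℝ, r0p x = c)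
    -- well-preparedness of the data at time tⁿ: ∇ρ₀ⁿ = 0 and ∇·u₀ⁿ = 0
    (hwp1 : ∀ (x : Fin d → ℝ) (i : Fin d), pder r0n i x = 0)
    (hwp2 : ∀ x : Fin d → ℝ, divg u0n x = 0)
    -- mass update of the first-order time semi-discrete scheme, for every ε ∈ (0,1]
    (mass : ∀ ε ∈ Set.Ioc (0 : ℝ) 1, ∀ x : Fin d → ℝ,
      ((r0p x + ε ^ 2 * r2p x) - (r0n x + ε ^ 2 * r2n x)) / Δt
        + divg (fun y i => (r0p y + ε ^ 2 * r2p y) * (u0p y i + ε * u1p y i)) x = 0)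
    -- momentum update of the first-order time semi-discrete scheme, for every ε ∈ (0,1]
    (mom : ∀ ε ∈ Set.Ioc (0 : ℝ) 1, ∀ (x : Fin d → ℝ) (j : Fin d),
      ((r0p x + ε ^ 2 * r2p x) * (u0p x j + ε * u1p x j)
          - (r0n x + ε ^ 2 * r2n x) * (u0n x j + ε * u1n x j)) / Δt
        + (∑ i, pder (fun y =>
            ((r0n y + ε ^ 2 * r2n y) * (u0n y j + ε * u1n y j))
              * ((r0n y + ε ^ 2 * r2n y) * (u0n y i + ε * u1n y i))
              / (r0n y + ε ^ 2 * r2n y)) i x)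
        + (1 / ε ^ 2) * pder (fun y =>
            (r0n y + ε ^ 2 * r2n y) ^ γ - (r0n y + ε ^ 2 * r2n y)) j x
        + (1 / ε ^ 2) * pder (fun y => r0p y + ε ^ 2 * r2p y) j x = 0) :
    ∀ (x : Fin d → ℝ) (j : Fin d),
      (u0p x j - u0n x j) / Δt
        + (∑ i, pder (fun y => u0n y j * u0n y i) i x)
        + (1 / c) * pder (fun y =>
            γ * c ^ (γ - 1) * r2n y - r2n y + r2p y) j x = 0 := by
  intro x j
  obtain rfl : r0n = fun _ => c := funext hr0nc
  obtain rfl : r0p = fun _ => c := funext hr0pc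
  have d2n : DifferentiableAt ℝ r2n x := hr2n.differentiable (by simp) x
  have d2p : DifferentiableAt ℝ r2p x := hr2p.differentiable (by simp) x
  have d0 : ∀ k, DifferentiableAt ℝ (fun y => u0n y k) x := fun k =>
    differentiableAt_pi.1 (hu0n.differentiable (by simp) x) k
  have d1 : ∀ k, DifferentiableAt ℝ (fun y => u1n y k) x := fun k =>
    differentiableAt_pi.1 (hu1n.differentiable (by simp) x) k
  -- The left-hand side of the momentum update at `(x, j)`, with all derivatives expanded and the
  -- factors `1 / ε ^ 2` cancelled, so that it makes sense at `ε = 0`.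
  let F : ℝ → ℝ := fun ε =>
    ((c + ε ^ 2 * r2p x) * (u0p x j + ε * u1p x j)
        - (c + ε ^ 2 * r2n x) * (u0n x j + ε * u1n x j)) / Δt
      + (∑ i, (ε ^ 2 * pder r2n i x * ((u0n x j + ε * u1n x j) * (u0n x i + ε * u1n x i))
          + (c + ε ^ 2 * r2n x) *
            ((pder (fun y => u0n y j) i x + ε * pder (fun y => u1n y j) i x)
                * (u0n x i + ε * u1n x i)
              + (u0n x j + ε * u1n x j)
                * (pder (fun y => u0n y i) i x + ε * pder (fun y => u1n y i) i x))))
      + (γ * (c + ε ^ 2 * r2n x) ^ (γ - 1) * pder r2n j x - pder r2n j x)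
      + pder r2p j x
  have hFc : ContinuousAt F 0 := by
    have h : ContinuousAt (fun ε : ℝ => (c + ε ^ 2 * r2n x) ^ (γ - 1)) 0 :=
      ContinuousAt.rpow_const (by fun_prop) (Or.inl (by simpa using hc.ne'))
    fun_prop
  have hpos : ∀ᶠ ε in 𝓝[>] (0 : ℝ), 0 < c + ε ^ 2 * r2n x := by
    have h : ContinuousAt (fun ε : ℝ => c + ε ^ 2 * r2n x) 0 := by fun_prop
    exact (h.eventually (lt_mem_nhds (by simpa using hc))).filter_mono nhdsWithin_le_nhds
  have hF : ∀ᶠ ε in 𝓝[>] (0 : ℝ), F ε = 0 := by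
    filter_upwards [hpos, Ioc_mem_nhdsGT (zero_lt_one' ℝ)] with ε hε hε1
    rw [← mom ε hε1 x j]
    have hε0 : ε ≠ 0 := hε1.1.ne'
    have hρ : HasFDerivAt (fun y => c + ε ^ 2 * r2n y) (ε ^ 2 • fderiv ℝ r2n x) x :=
      (d2n.hasFDerivAt.const_mul (ε ^ 2)).const_add c
    have hv : ∀ k, HasFDerivAt (fun y => u0n y k + ε * u1n y k)
        (fderiv ℝ (fun y => u0n y k) x + ε • fderiv ℝ (fun y => u1n y k) x) x := fun k =>
      (d0 k).hasFDerivAt.add ((d1 k).hasFDerivAt.const_mul ε)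
    have hflux : ∀ i, pder (fun y =>
            ((c + ε ^ 2 * r2n y) * (u0n y j + ε * u1n y j))
              * ((c + ε ^ 2 * r2n y) * (u0n y i + ε * u1n y i))
              / (c + ε ^ 2 * r2n y)) i x
        = ε ^ 2 * pder r2n i x * ((u0n x j + ε * u1n x j) * (u0n x i + ε * u1n x i))
          + (c + ε ^ 2 * r2n x) *
            ((pder (fun y => u0n y j) i x + ε * pder (fun y => u1n y j) i x)
                * (u0n x i + ε * u1n x i)
              + (u0n x j + ε * u1n x j)
                * (pder (fun y => u0n y i) i x + ε * pder (fun y => u1n y i) i x)) := by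
      intro i
      -- The density is positive near `x` only, so the division is simplified locally.
      have hev : (fun y => ((c + ε ^ 2 * r2n y) * (u0n y j + ε * u1n y j))
              * ((c + ε ^ 2 * r2n y) * (u0n y i + ε * u1n y i))
              / (c + ε ^ 2 * r2n y)) =ᶠ[𝓝 x] fun y => (c + ε ^ 2 * r2n y) *
                ((u0n y j + ε * u1n y j) * (u0n y i + ε * u1n y i)) := by
        filter_upwards [hρ.continuousAt.eventually_ne hε.ne'] with y hy
        field_simp
      have h := hρ.mul ((hv j).mul (hv i))
      unfold pder
      rw [hev.fderiv_eq]
      erw [h.fderiv]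
      simp
      ring
    have hpress : pder (fun y => (c + ε ^ 2 * r2n y) ^ γ - (c + ε ^ 2 * r2n y)) j x
        = ε ^ 2 * (γ * (c + ε ^ 2 * r2n x) ^ (γ - 1) * pder r2n j x - pder r2n j x) := by
      have h := (hρ.rpow_const (p := γ) (Or.inl hε.ne')).sub hρ
      unfold pder
      erw [h.fderiv]
      simp
      ring
    have hnew : pder (fun y => c + ε ^ 2 * r2p y) j x = ε ^ 2 * pder r2p j x := by
      have h := (d2p.hasFDerivAt.const_mul (ε ^ 2)).const_add c
      unfold pder
      rw [h.fderiv]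
      simp
    simp only [hflux, hpress, hnew, F]
    field_simp
  have hF0 : F 0 = 0 :=
    tendsto_nhds_unique (hFc.tendsto.mono_left nhdsWithin_le_nhds)
      (tendsto_const_nhds.congr' (hF.mono fun _ h => h.symm))
  have hlim : ∀ i, pder (fun y => u0n y j * u0n y i) i x
      = pder (fun y => u0n y j) i x * u0n x i + u0n x j * pder (fun y => u0n y i) i x := by
    intro i
    have h := (d0 j).hasFDerivAt.mul (d0 i).hasFDerivAt
    unfold pder
    erw [h.fderiv]
    simp
    ring
  have hp : pder (fun y => γ * c ^ (γ - 1) * r2n y - r2n y + r2p y) j x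
      = γ * c ^ (γ - 1) * pder r2n j x - pder r2n j x + pder r2p j x := by
    have h := ((d2n.hasFDerivAt.const_mul (γ * c ^ (γ - 1))).sub d2n.hasFDerivAt).add
      d2p.hasFDerivAt
    unfold pder
    erw [h.fderiv]
    simp
  have hF0' : (c * u0p x j - c * u0n x j) / Δt
      + c * (∑ i, (pder (fun y => u0n y j) i x * u0n x i
          + u0n x j * pder (fun y => u0n y i) i x))
      + (γ * c ^ (γ - 1) * pder r2n j x - pder r2n j x) + pder r2p j x = 0 := by
    rw [Finset.mul_sum, ← hF0]
    simp [F]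
  simp only [hlim, hp]
  rw [← mul_right_inj' hc.ne', mul_zero, ← hF0']
  field_simp
  ring
end

section
/- A pair of smooth functions (ρᵏ, qᵏ) on ℝ^d satisfies the k-th stage equations of the s-stage IMEX-RK time semi-discrete scheme, ρᵏ = ρⁿ − Δt Σ_{ℓ=1}^{k} a_{kℓ} ∇·qˡ and qᵏ = qⁿ − Δt Σ_{ℓ=1}^{k−1} ã_{kℓ} ( ∇·(qˡ⊗qˡ/ρˡ) + ∇(pˡ − ρˡ)/ε² ) − Δt Σ_{ℓ=1}^{k} a_{kℓ} ∇ρˡ/ε², if and only if ρᵏ solves the linear elliptic problem −(Δt² a_{kk}²/ε²) Δρᵏ + ρᵏ = ρ̂ᵏ − Δt a_{kk} ∇·q̂ᵏ and qᵏ = q̂ᵏ − (Δt a_{kk}/ε²) ∇ρᵏ. In particular the high-order time semi-discrete scheme and its reformulation are equivalent. -/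
/-!
Both formulations contain the same momentum equation, `qᵏ = q̂ᵏ - (Δt a_{kk}/ε²) ∇ρᵏ`, once the
implicit term of the stage sum is split off. Under this equation `q̂ᵏ = qᵏ + (Δt a_{kk}/ε²) ∇ρᵏ`
pointwise, so taking the divergence gives `∇·q̂ᵏ = ∇·qᵏ + (Δt a_{kk}/ε²) Δρᵏ`
(`divg_eq_add_lap`), and substituting this turns the mass equation into the elliptic equation and
back. The differentiability of `q̂ᵏ` is inherited from `qᵏ` and `∇ρᵏ` through the same identity.
-/

open Real

/-- Spatial Laplacian. -/
noncomputable def lap {d : ℕ} (f : (Fin d → ℝ) → ℝ) (x : Fin d → ℝ) : ℝ :=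
  ∑ i, pder (fun y => pder f i y) i x

/-- The explicitly computable stage density predictor
`ρ̂ᵏ := ρⁿ - Δt Σ_{ℓ=1}^{k-1} a_{kℓ} ∇·qˡ`. -/
noncomputable def rhohat {d : ℕ} (Δt : ℝ) (a : ℕ → ℝ) (k : ℕ)
    (ρn : (Fin d → ℝ) → ℝ) (qst : ℕ → (Fin d → ℝ) → (Fin d → ℝ))
    (x : Fin d → ℝ) : ℝ :=
  ρn x - Δt * ∑ l ∈ Finset.Icc 1 (k - 1), a l * divg (qst l) x

/-- The explicitly computable stage momentum predictor
`q̂ᵏ := qⁿ - Δt Σ_{ℓ=1}^{k-1} aE_{kℓ} (∇·(qˡ⊗qˡ/ρˡ) + ∇((ρˡ)^γ - ρˡ)/ε²)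
      - Δt Σ_{ℓ=1}^{k-1} a_{kℓ} ∇ρˡ/ε²`. -/
noncomputable def qhatk {d : ℕ} (ε Δt γ : ℝ) (aE a : ℕ → ℝ) (k : ℕ)
    (qn : (Fin d → ℝ) → (Fin d → ℝ)) (ρst : ℕ → (Fin d → ℝ) → ℝ)
    (qst : ℕ → (Fin d → ℝ) → (Fin d → ℝ)) (x : Fin d → ℝ) : Fin d → ℝ :=
  fun j => qn x j
    - Δt * ∑ l ∈ Finset.Icc 1 (k - 1), aE l *
        ((∑ i, pder (fun z => qst l z j * qst l z i / ρst l z) i x)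
          + (1 / ε ^ 2) * pder (fun z => ρst l z ^ γ - ρst l z) j x)
    - Δt * ∑ l ∈ Finset.Icc 1 (k - 1), a l * ((1 / ε ^ 2) * pder (ρst l) j x)

/-- The divergence of the momentum update `v = w - c ∇f`, solved for `w`. The field `w` is not
assumed differentiable: this follows from the smoothness of `v` and `f`. -/
lemma divg_eq_add_lap {d : ℕ} {c : ℝ} {f : (Fin d → ℝ) → ℝ} {v w : (Fin d → ℝ) → (Fin d → ℝ)}
    (hf : ContDiff ℝ (⊤ : ℕ∞) f) (hv : ContDiff ℝ (⊤ : ℕ∞) v)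
    (h : ∀ x j, v x j = w x j - c * pder f j x) (x : Fin d → ℝ) :
    divg w x = divg v x + c * lap f x := by
  unfold divg lap
  rw [Finset.mul_sum, ← Finset.sum_add_distrib]
  refine Finset.sum_congr rfl fun i _ => ?_
  have hw : (fun y => w y i) = fun y => v y i + c * pder f i y := by
    funext y
    linarith [h y i]
  have hvi : DifferentiableAt ℝ (fun y => v y i) x :=
    (contDiff_pi.1 hv i).differentiable (by simp) x
  have hfi : DifferentiableAt ℝ (fun y => pder f i y) x := by
    have hsm : ContDiff ℝ (⊤ : ℕ∞) (fun y => pder f i y) :=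
      (hf.fderiv_right (m := (⊤ : ℕ∞)) le_rfl).clm_apply contDiff_const
    exact hsm.differentiable (by simp) x
  rw [hw]
  change fderiv ℝ (fun y => v y i + c * pder f i y) x (Pi.single i 1) = _
  rw [fderiv_fun_add hvi (hfi.const_mul c), fderiv_const_mul hfi]
  rfl

/-- a pair of smooth functions `(ρᵏ, qᵏ)` satisfies the `k`-th stage
equations of the `s`-stage IMEX-RK time semi-discrete scheme iff `ρᵏ` solves the
linear elliptic problem `-(Δt² a_{kk}²/ε²) Δρᵏ + ρᵏ = ρ̂ᵏ - Δt a_{kk} ∇·q̂ᵏ` and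
`qᵏ = q̂ᵏ - (Δt a_{kk}/ε²) ∇ρᵏ`. In particular the high-order time semi-discrete
scheme and its reformulation are equivalent. -/
theorem imex_stage_equivalent_reformulation
    {d : ℕ} (ε Δt γ : ℝ) (hε : 0 < ε) (hΔt : 0 < Δt) (hγ : 1 ≤ γ)
    (k : ℕ) (hk : 1 ≤ k) (aE a : ℕ → ℝ)
    (ρn : (Fin d → ℝ) → ℝ) (qn : (Fin d → ℝ) → (Fin d → ℝ))
    (ρst : ℕ → (Fin d → ℝ) → ℝ) (qst : ℕ → (Fin d → ℝ) → (Fin d → ℝ))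
    (hρn : ContDiff ℝ (⊤ : ℕ∞) ρn) (hρnpos : ∀ x, 0 < ρn x)
    (hqn : ContDiff ℝ (⊤ : ℕ∞) qn)
    (hρst : ∀ l ∈ Finset.Icc 1 (k - 1),
      ContDiff ℝ (⊤ : ℕ∞) (ρst l) ∧ ∀ x, 0 < ρst l x)
    (hqst : ∀ l ∈ Finset.Icc 1 (k - 1), ContDiff ℝ (⊤ : ℕ∞) (qst l))
    (ρk : (Fin d → ℝ) → ℝ) (qk : (Fin d → ℝ) → (Fin d → ℝ))
    (hρk : ContDiff ℝ (⊤ : ℕ∞) ρk) (hqk : ContDiff ℝ (⊤ : ℕ∞) qk) :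
    -- k-th stage of the IMEX-RK time semi-discrete scheme
    ((∀ x : Fin d → ℝ,
        ρk x = ρn x - Δt * ((∑ l ∈ Finset.Icc 1 (k - 1), a l * divg (qst l) x)
          + a k * divg qk x)) ∧
      (∀ (x : Fin d → ℝ) (j : Fin d),
        qk x j = qn x j
          - Δt * ∑ l ∈ Finset.Icc 1 (k - 1), aE l *
              ((∑ i, pder (fun z => qst l z j * qst l z i / ρst l z) i x)
                + (1 / ε ^ 2) * pder (fun z => ρst l z ^ γ - ρst l z) j x)
          - Δt * ((∑ l ∈ Finset.Icc 1 (k - 1), a l * ((1 / ε ^ 2) * pder (ρst l) j x))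
              + a k * ((1 / ε ^ 2) * pder ρk j x))))
    ↔
    -- reformulated k-th stage
    ((∀ x : Fin d → ℝ,
        -(Δt ^ 2 * (a k) ^ 2 / ε ^ 2) * lap ρk x + ρk x
          = rhohat Δt a k ρn qst x
            - Δt * a k * divg (qhatk ε Δt γ aE a k qn ρst qst) x) ∧
      (∀ (x : Fin d → ℝ) (j : Fin d),
        qk x j = qhatk ε Δt γ aE a k qn ρst qst x j
          - (Δt * a k / ε ^ 2) * pder ρk j x)) := by
  have hmom : ∀ (x : Fin d → ℝ) (j : Fin d),
      (qk x j = qn x j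
          - Δt * ∑ l ∈ Finset.Icc 1 (k - 1), aE l *
              ((∑ i, pder (fun z => qst l z j * qst l z i / ρst l z) i x)
                + (1 / ε ^ 2) * pder (fun z => ρst l z ^ γ - ρst l z) j x)
          - Δt * ((∑ l ∈ Finset.Icc 1 (k - 1), a l * ((1 / ε ^ 2) * pder (ρst l) j x))
              + a k * ((1 / ε ^ 2) * pder ρk j x))) ↔
        qk x j = qhatk ε Δt γ aE a k qn ρst qst x j - (Δt * a k / ε ^ 2) * pder ρk j x := by
    intro x j
    unfold qhatk
    refine Eq.congr_right ?_
    ring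
  simp only [hmom]
  refine and_congr_left fun hq => forall_congr' fun x => ?_
  rw [divg_eq_add_lap hρk hqk hq x]
  unfold rhohat
  -- The Laplacian terms cancel, so both equations are the same up to rearrangement.
  constructor <;> intro h <;> linear_combination h
end

section
/- Then the k-th stage is well-prepared: the leading-order stage density equals the initial one, ρ₀ᵏ = ρ₀ⁿ (a positive constant), and the leading-order stage velocity is divergence-free, ∇·u₀ᵏ = 0 on ℝ^d. Hence, by induction over the stages, the IMEX-RK time semi-discrete scheme maps well-prepared data to well-prepared data and is asymptotically consistent with the zero Mach number limit. -/
/-!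
Letting `ε → 0` in the mass update, with all fluxes polynomial in `ε`, gives
`ρ₀ᵏ = ρ₀ⁿ - Δt ∑ a_{kℓ} ∇·(ρ₀ˡ u₀ˡ)`. The earlier stages contribute nothing, and `ρ₀ᵏ` is a
constant `C` since its gradient vanishes, so `C = c - Δt a_{kk} C ∇·u₀ᵏ`. Hence `∇·u₀ᵏ` is constant
in space. By the divergence theorem on the unit cube the divergence of a periodic field has
integral zero (`integral_divg_periodic`), so this constant is zero, and then `C = c`.
-/

open Real

theorem divg_const_mul {d : ℕ} (C : ℝ) {u : (Fin d → ℝ) → (Fin d → ℝ)}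
    (hu : Differentiable ℝ u) (x : Fin d → ℝ) :
    divg (fun y i => C * u y i) x = C * divg u x := by
  have h : ∀ i, DifferentiableAt ℝ (fun y => u y i) x := fun i => by fun_prop
  simp only [divg, pder, Finset.mul_sum]
  refine Finset.sum_congr rfl fun i _ => ?_
  rw [fderiv_const_mul (h i)]
  rfl

/-- The divergence of the momentum is a cubic polynomial in `ε`; its constant term is the
divergence of the leading-order momentum. -/
theorem divg_expand {d : ℕ} (ε : ℝ) {r s : (Fin d → ℝ) → ℝ} {u v : (Fin d → ℝ) → (Fin d → ℝ)}
    (hr : Differentiable ℝ r) (hs : Differentiable ℝ s)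
    (hu : Differentiable ℝ u) (hv : Differentiable ℝ v) (x : Fin d → ℝ) :
    divg (fun y i => (r y + ε ^ 2 * s y) * (u y i + ε * v y i)) x
      = divg (fun y i => r y * u y i) x + ε * divg (fun y i => r y * v y i) x
        + ε ^ 2 * divg (fun y i => s y * u y i) x + ε ^ 3 * divg (fun y i => s y * v y i) x := by
  simp only [divg, pder, Finset.mul_sum, ← Finset.sum_add_distrib]
  refine Finset.sum_congr rfl fun i _ => ?_
  have h1 : HasFDerivAt (fun y => r y * u y i) _ x :=
    (show DifferentiableAt ℝ (fun y => r y * u y i) x by fun_prop).hasFDerivAt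
  have h2 : HasFDerivAt (fun y => r y * v y i) _ x :=
    (show DifferentiableAt ℝ (fun y => r y * v y i) x by fun_prop).hasFDerivAt
  have h3 : HasFDerivAt (fun y => s y * u y i) _ x :=
    (show DifferentiableAt ℝ (fun y => s y * u y i) x by fun_prop).hasFDerivAt
  have h4 : HasFDerivAt (fun y => s y * v y i) _ x :=
    (show DifferentiableAt ℝ (fun y => s y * v y i) x by fun_prop).hasFDerivAt
  have h := ((h1.add (h2.const_mul ε)).add (h3.const_mul (ε ^ 2))).add (h4.const_mul (ε ^ 3))
  have e : (fun y => (r y + ε ^ 2 * s y) * (u y i + ε * v y i))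
      = (((fun y => r y * u y i) + fun y => ε * (r y * v y i))
        + fun y => ε ^ 2 * (s y * u y i)) + fun y => ε ^ 3 * (s y * v y i) := by
    funext y
    simp only [Pi.add_apply]
    ring
  rw [e, h.fderiv]
  simp

theorem const_of_pder_eq_zero {d : ℕ} {f : (Fin d → ℝ) → ℝ} (hf : Differentiable ℝ f)
    (h : ∀ x i, pder f i x = 0) (x y : Fin d → ℝ) : f x = f y := by
  refine is_const_of_fderiv_eq_zero hf (fun z => ?_) x y
  apply ContinuousLinearMap.coe_injective
  refine LinearMap.pi_ext' fun i => LinearMap.ext_ring ?_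
  simpa [pder] using h z i

/-- Opposite faces of the unit cube cancel in the divergence theorem. -/
theorem integral_divg_periodic {n : ℕ} {u : (Fin (n + 1) → ℝ) → (Fin (n + 1) → ℝ)}
    (hu : ContDiff ℝ (⊤ : ℕ∞) u)
    (hper : ∀ (x : Fin (n + 1) → ℝ) (z : Fin (n + 1) → ℤ), u (x + fun i => (z i : ℝ)) = u x) :
    ∫ x in Set.Icc (0 : Fin (n + 1) → ℝ) 1, divg u x = 0 := by
  have hd : Differentiable ℝ u := hu.differentiable (by simp)
  have hdiv : ∀ x, divg u x = ∑ i, fderiv ℝ u x (Pi.single i 1) i := fun x => by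
    refine Finset.sum_congr rfl fun i _ => ?_
    have h := (hasFDerivAt_pi'.1 (hd x).hasFDerivAt i).fderiv
    simp only [pder]
    rw [h]
    rfl
  have hcont : Continuous fun x => ∑ i, fderiv ℝ u x (Pi.single i 1) i := by
    have hc : Continuous (fderiv ℝ u) := hu.continuous_fderiv (by simp)
    fun_prop
  simp only [hdiv]
  rw [MeasureTheory.integral_divergence_of_hasFDerivAt_off_countable (0 : Fin (n + 1) → ℝ) 1
    (fun i => zero_le_one) u (fderiv ℝ u) ∅ Set.countable_empty hd.continuous.continuousOn
    (fun x _ => (hd x).hasFDerivAt)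
    (hcont.continuousOn.integrableOn_compact isCompact_Icc)]
  refine Finset.sum_eq_zero fun i _ => sub_eq_zero.2 ?_
  refine MeasureTheory.integral_congr_ae (Filter.Eventually.of_forall fun y => ?_)
  -- the two faces differ by the lattice vector `eᵢ`
  have h := hper (i.insertNth (0 : ℝ) y) (Pi.single i 1)
  have e : (i.insertNth (0 : ℝ) y : Fin (n + 1) → ℝ)
      + (fun j => ((Pi.single i 1 : Fin (n + 1) → ℤ) j : ℝ)) = i.insertNth (1 : ℝ) y := by
    funext j
    refine Fin.succAboveCases i ?_ (fun j => ?_) j <;> simp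
  rw [e] at h
  exact congrFun h i

/-- A periodic field whose divergence is constant in space is divergence-free. -/
theorem divg_eq_zero_of_const {d : ℕ} {u : (Fin d → ℝ) → (Fin d → ℝ)}
    (hu : ContDiff ℝ (⊤ : ℕ∞) u)
    (hper : ∀ (x : Fin d → ℝ) (z : Fin d → ℤ), u (x + fun i => (z i : ℝ)) = u x)
    {D : ℝ} (hD : ∀ x, divg u x = D) : D = 0 := by
  cases d with
  | zero => simpa [divg] using (hD 0).symm
  | succ n =>
    have h := integral_divg_periodic hu hper
    simpa [hD, MeasureTheory.measureReal_def, Real.volume_Icc_pi] using h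

/-- in the `k`-th stage of the IMEX-RK time semi-discrete scheme with
`a_{kk} ≠ 0`, applied to smooth, ℤ^d-periodic data `ρᵐ_ε = ρ₀ᵐ + ε²ρ₂ᵐ`,
`qᵐ_ε = ρᵐ_ε(u₀ᵐ + ε u₁ᵐ)` (labels `m = 0` for `n` and `m = 1, …, k` for the stages)
which are well-prepared up to stage `k-1` (`ρ₀ᵐ = ρ₀ⁿ = c` a positive constant and
`∇·u₀ᵐ = 0` for `m ∈ {n, 1, …, k-1}`), if `∇ρ₀ᵏ = 0` and the stage mass update holds
for every `ε ∈ (0,1]`, then the `k`-th stage is well-prepared: `ρ₀ᵏ = ρ₀ⁿ = c` and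
`∇·u₀ᵏ = 0` on `ℝ^d`. Hence, by induction over the stages, the IMEX-RK time
semi-discrete scheme maps well-prepared data to well-prepared data and is
asymptotically consistent with the zero Mach number limit. -/
theorem imex_stage_well_prepared
    {d : ℕ} (Δt γ : ℝ) (hΔt : 0 < Δt) (hγ : 1 ≤ γ)
    (k : ℕ) (hk : 1 ≤ k) (aE a : ℕ → ℝ) (hakk : a k ≠ 0)
    -- coefficient functions; label 0 stands for the data at time tⁿ
    (r0 r2 : ℕ → (Fin d → ℝ) → ℝ) (u0 u1 : ℕ → (Fin d → ℝ) → (Fin d → ℝ))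
    (hr0 : ∀ m ∈ Finset.range (k + 1), ContDiff ℝ (⊤ : ℕ∞) (r0 m))
    (hr2 : ∀ m ∈ Finset.range (k + 1), ContDiff ℝ (⊤ : ℕ∞) (r2 m))
    (hu0 : ∀ m ∈ Finset.range (k + 1), ContDiff ℝ (⊤ : ℕ∞) (u0 m))
    (hu1 : ∀ m ∈ Finset.range (k + 1), ContDiff ℝ (⊤ : ℕ∞) (u1 m))
    (hr0pos : ∀ m ∈ Finset.range (k + 1), ∀ x, 0 < r0 m x)
    -- ℤ^d-periodicity of all coefficient functions
    (hperR : ∀ m ∈ Finset.range (k + 1), ∀ f ∈ [r0 m, r2 m],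
      ∀ (x : Fin d → ℝ) (z : Fin d → ℤ), f (x + fun i => (z i : ℝ)) = f x)
    (hperU : ∀ m ∈ Finset.range (k + 1), ∀ g ∈ [u0 m, u1 m],
      ∀ (x : Fin d → ℝ) (z : Fin d → ℤ), g (x + fun i => (z i : ℝ)) = g x)
    -- well-preparedness of the data and of all earlier stages:
    -- ρ₀ᵐ = ρ₀ⁿ = c is the same positive constant and ∇·u₀ᵐ = 0 for m ≤ k-1
    (c : ℝ) (hc : 0 < c)
    (hwpρ : ∀ m ∈ Finset.range k, ∀ x : Fin d → ℝ, r0 m x = c)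
    (hwpu : ∀ m ∈ Finset.range k, ∀ x : Fin d → ℝ, divg (u0 m) x = 0)
    -- the O(ε⁻²) stage balance: ∇ρ₀ᵏ = 0
    (hgradk : ∀ (x : Fin d → ℝ) (i : Fin d), pder (r0 k) i x = 0)
    -- k-th stage mass update, for every ε ∈ (0,1]
    (mass : ∀ ε ∈ Set.Ioc (0 : ℝ) 1, ∀ x : Fin d → ℝ,
      r0 k x + ε ^ 2 * r2 k x
        = (r0 0 x + ε ^ 2 * r2 0 x)
          - Δt * ∑ l ∈ Finset.Icc 1 k, a l *
              divg (fun y i => (r0 l y + ε ^ 2 * r2 l y) * (u0 l y i + ε * u1 l y i)) x) :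
    (∀ x : Fin d → ℝ, r0 k x = c) ∧ (∀ x : Fin d → ℝ, divg (u0 k) x = 0) := by
  have hlast : k ∈ Finset.range (k + 1) := by simp
  have hsm : ∀ m ∈ Finset.range (k + 1), Differentiable ℝ (r0 m) ∧ Differentiable ℝ (r2 m) ∧
      Differentiable ℝ (u0 m) ∧ Differentiable ℝ (u1 m) := fun m hm =>
    ⟨(hr0 m hm).differentiable (by simp), (hr2 m hm).differentiable (by simp),
      (hu0 m hm).differentiable (by simp), (hu1 m hm).differentiable (by simp)⟩
  have hconst : ∀ x, r0 k x = r0 k 0 := fun x =>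
    const_of_pder_eq_zero (hsm k hlast).1 hgradk x 0
  have hC : 0 < r0 k 0 := hr0pos k hlast 0
  -- the `O(1)` part of the mass update, as the limit `ε → 0⁺`
  have hlead : ∀ x, r0 k x
      = r0 0 x - Δt * ∑ l ∈ Finset.Icc 1 k, a l * divg (fun y i => r0 l y * u0 l y i) x := by
    intro x
    let F : ℝ → ℝ := fun ε => (r0 0 x + ε ^ 2 * r2 0 x) - Δt * ∑ l ∈ Finset.Icc 1 k, a l *
      (divg (fun y i => r0 l y * u0 l y i) x + ε * divg (fun y i => r0 l y * u1 l y i) x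
        + ε ^ 2 * divg (fun y i => r2 l y * u0 l y i) x
        + ε ^ 3 * divg (fun y i => r2 l y * u1 l y i) x)
    let G : ℝ → ℝ := fun ε => r0 k x + ε ^ 2 * r2 k x
    have hF : Continuous F := by fun_prop
    have hG : Continuous G := by fun_prop
    have hFG : G =ᶠ[nhdsWithin 0 (Set.Ioi 0)] F := by
      filter_upwards [Ioc_mem_nhdsGT (zero_lt_one' ℝ)] with ε hε
      refine (mass ε hε x).trans ?_
      simp only [F]
      congr 2
      refine Finset.sum_congr rfl fun l hl => ?_
      have hl' : l ∈ Finset.range (k + 1) := by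
        simp only [Finset.mem_Icc, Finset.mem_range] at hl ⊢
        lia
      obtain ⟨h1, h2, h3, h4⟩ := hsm l hl'
      rw [divg_expand ε h1 h2 h3 h4]
    have h0 : G 0 = F 0 := tendsto_nhds_unique
      ((hG.tendsto 0).mono_left nhdsWithin_le_nhds)
      (((hF.tendsto 0).mono_left nhdsWithin_le_nhds).congr' hFG.symm)
    simpa [F, G] using h0
  have hbal : ∀ x, r0 k 0 = c - Δt * (a k * (r0 k 0 * divg (u0 k) x)) := by
    intro x
    have h := hlead x
    rw [hconst x, hwpρ 0 (by simp; lia) x, Finset.sum_eq_single_of_mem k (by simp [hk])] at h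
    · rw [show (fun (y : Fin d → ℝ) i => r0 k y * u0 k y i) = fun y i => r0 k 0 * u0 k y i from
        funext fun y => funext fun i => by rw [hconst y],
        divg_const_mul _ (hsm k hlast).2.2.1] at h
      exact h
    · intro l hl hne
      have hl' : l ∈ Finset.range k := by
        simp only [Finset.mem_Icc, Finset.mem_range] at hl ⊢
        lia
      rw [show (fun (y : Fin d → ℝ) i => r0 l y * u0 l y i) = fun y i => c * u0 l y i from
        funext fun y => funext fun i => by rw [hwpρ l hl' y],
        divg_const_mul _ (hsm l (Finset.mem_range.2 (by have := Finset.mem_range.1 hl'; lia))).2.2.1,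
        hwpu l hl' x]
      simp
  have hdivc : ∀ x, divg (u0 k) x = (c - r0 k 0) / (Δt * a k * r0 k 0) := by
    intro x
    rw [eq_div_iff (mul_ne_zero (mul_ne_zero hΔt.ne' hakk) hC.ne')]
    linarith [hbal x]
  have hD := divg_eq_zero_of_const (hu0 k hlast) (hperU k hlast (u0 k) (by simp)) hdivc
  have hdiv0 : ∀ x, divg (u0 k) x = 0 := fun x => (hdivc x).trans hD
  refine ⟨fun x => ?_, hdiv0⟩
  have h := hbal x
  rw [hdiv0 x] at h
  rw [hconst x]
  linarith
end

section
/- Let γ ≥ 1, ρ > 0, q ∈ ℝ³ and m ∈ {1,2,3}. Define Φ: ℝ × ℝ³ → ℝ × ℝ³ by Φ(ρ, q) = (0, (q_m/ρ)·q + (ρ^γ − ρ)·e_m), where e_m is the m-th standard basis vector (this is the explicit part of the split momentum flux in direction m, with zero mass component). Then the characteristic polynomial of the derivative (Jacobian matrix) of Φ at (ρ, q) is λ·(λ − q_m/ρ)²·(λ − 2 q_m/ρ); equivalently, its eigenvalues are 0, q_m/ρ (with algebraic multiplicity two), and 2 q_m/ρ. -/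
/-!
The mass row of the Jacobian vanishes, so the first column, the only place where the pressure law
enters, does not affect the characteristic polynomial: it is `X` times that of the momentum block
`(q_m/ρ) I + (1/ρ) q e_mᵀ`. This is a rank-one perturbation of a scalar matrix, with eigenvalues
`q_m/ρ` (twice) and `q_m/ρ + q_m/ρ`. The entries come from `explicitFlux_fderiv_succ`; the
determinant is then expanded for each of the three directions `m`.
-/

open Real Polynomial

/-- The explicit part of the split momentum flux in the coordinate direction `m`,
acting on the conservative variables `U = (ρ, q) ∈ ℝ × ℝ³` (identified with `ℝ⁴`,
component `0` being the density): the mass component is `0` and the momentum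
component is `(q_m/ρ)·q + (ρ^γ - ρ)·e_m`. -/
noncomputable def explicitFlux (γ : ℝ) (m : Fin 3) (U : Fin 4 → ℝ) : Fin 4 → ℝ :=
  Fin.cons 0 fun i : Fin 3 =>
    (U m.succ / U 0) * U i.succ + (U 0 ^ γ - U 0) * (if i = m then 1 else 0)

/-- The Jacobian matrix of the explicit flux at the state `U = (ρ, q)`. -/
noncomputable def fluxJacobian (γ : ℝ) (m : Fin 3) (ρ : ℝ) (q : Fin 3 → ℝ) :
    Matrix (Fin 4) (Fin 4) ℝ :=
  Matrix.of fun i j => fderiv ℝ (fun U => explicitFlux γ m U i) (Fin.cons ρ q) (Pi.single j 1)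

/-- The directional derivative of the momentum flux along `v`, by the product and quotient rules;
`ρ ≠ 0` makes both the quotient and the power differentiable. -/
theorem explicitFlux_fderiv_succ (γ : ℝ) (ρ : ℝ) (hρ : 0 < ρ) (q : Fin 3 → ℝ) (m i : Fin 3)
    (v : Fin 4 → ℝ) :
    fderiv ℝ (fun U => explicitFlux γ m U i.succ) (Fin.cons ρ q) v
      = (v m.succ / ρ - q m * v 0 / ρ ^ 2) * q i + q m / ρ * v i.succ
        + (γ * ρ ^ (γ - 1) - 1) * v 0 * (if i = m then 1 else 0) := by
  have hproj (k : Fin 4) : HasFDerivAt (fun U : Fin 4 → ℝ => U k)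
      (ContinuousLinearMap.proj (R := ℝ) (φ := fun _ : Fin 4 => ℝ) k)
      (Fin.cons ρ q : Fin 4 → ℝ) := hasFDerivAt_apply k _
  have hne : (Fin.cons ρ q : Fin 4 → ℝ) 0 ≠ 0 := by simpa using hρ.ne'
  have hinv : HasFDerivAt (fun U : Fin 4 → ℝ => (U 0)⁻¹)
      (-((Fin.cons ρ q : Fin 4 → ℝ) 0 ^ 2)⁻¹ •
        ContinuousLinearMap.proj (R := ℝ) (φ := fun _ : Fin 4 => ℝ) 0)
      (Fin.cons ρ q : Fin 4 → ℝ) :=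
    HasDerivAt.comp_hasFDerivAt (Fin.cons ρ q : Fin 4 → ℝ) (hasDerivAt_inv hne) (hproj 0)
  have h := ((((hproj m.succ).mul hinv).mul
    (hproj i.succ)).add
    ((((hproj 0).rpow_const (p := γ) (Or.inl hne)).sub (hproj 0)).mul_const
      (if i = m then (1 : ℝ) else 0)))
  have hfun : (fun U => explicitFlux γ m U i.succ) = fun U : Fin 4 → ℝ =>
      U m.succ * (U 0)⁻¹ * U i.succ + (U 0 ^ γ - U 0) * (if i = m then 1 else 0) := by
    funext U
    simp [explicitFlux, div_eq_mul_inv]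
  rw [hfun]
  refine (DFunLike.congr_fun (HasFDerivAt.fderiv h) v).trans ?_
  generalize (if i = m then (1 : ℝ) else 0) = δ
  simp
  field_simp
  ring

/-- for `γ ≥ 1`, `ρ > 0`, `q ∈ ℝ³` and `m ∈ {1,2,3}`, the characteristic
polynomial of the Jacobian of the explicit flux
`Φ(ρ, q) = (0, (q_m/ρ)·q + (ρ^γ - ρ)·e_m)` at `(ρ, q)` is
`λ (λ - q_m/ρ)² (λ - 2 q_m/ρ)`; equivalently, its eigenvalues are `0`, `q_m/ρ`
(with algebraic multiplicity two) and `2 q_m/ρ`. -/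
theorem explicit_flux_jacobian_charpoly
    (γ : ℝ) (hγ : 1 ≤ γ) (ρ : ℝ) (hρ : 0 < ρ) (q : Fin 3 → ℝ) (m : Fin 3) :
    (fluxJacobian γ m ρ q).charpoly
      = X * (X - C (q m / ρ)) ^ 2 * (X - C (2 * (q m / ρ))) := by
  have h0 (j : Fin 4) : fluxJacobian γ m ρ q 0 j = 0 := by
    simp [fluxJacobian, explicitFlux]
  have hs (i j : Fin 3) : fluxJacobian γ m ρ q i.succ j.succ
      = (if j = m then q i / ρ else 0) + (if i = j then q m / ρ else 0) := by
    refine (explicitFlux_fderiv_succ γ ρ hρ q m i (Pi.single j.succ 1)).trans ?_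
    have h1 : (Pi.single j.succ 1 : Fin 4 → ℝ) 0 = 0 := by simp
    have h2 (k : Fin 3) : (Pi.single j.succ 1 : Fin 4 → ℝ) k.succ = if k = j then 1 else 0 := by
      simp [Pi.single_apply]
    rw [h1, h2, h2]
    simp only [eq_comm (a := m)]
    split_ifs <;> ring
  have hc (i j : Fin 3) : (fluxJacobian γ m ρ q).charmatrix i.succ j.succ
      = (if i = j then X else 0)
        - C ((if j = m then q i / ρ else 0) + (if i = j then q m / ρ else 0)) := by
    simp [Matrix.charmatrix_apply, hs, Matrix.diagonal_apply]
  have hc0 : (fluxJacobian γ m ρ q).charmatrix 0 0 = X := by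
    simp [h0]
  have hc0' (j : Fin 3) : (fluxJacobian γ m ρ q).charmatrix 0 j.succ = 0 := by
    simp [h0, (Fin.succ_ne_zero j).symm]
  -- Only the corner entry `X` survives in the expansion along the first row.
  rw [two_mul (q m / ρ), Matrix.charpoly, Matrix.det_succ_row_zero, Fin.sum_univ_succ,
    Finset.sum_eq_zero (fun j _ => by rw [hc0']; ring), hc0, Matrix.det_fin_three]
  simp only [Matrix.submatrix_apply, Fin.zero_succAbove, hc]
  fin_cases m <;>
  · simp
    ring
end
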